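/- arXiv:0801.4220 — 4 statements merged into one kernel-verified Lean document; each statement's English description precedes it below -/
import Mathlib

section
/- For every t in the open interval (0,2), ∫_0^2 log|t-s| / √(2s - s²) ds = -π log 2. -/
open Real intervalIntegral

lemma aux_zero (a : ℝ) :
    IntervalIntegrable (fun θ : ℝ => Real.log ‖circleMap 0 1 θ - circleMap 0 1 a‖) MeasureTheory.volume 0 (2*π) ∧
    ∫ θ in (0:ℝ)..2*π, Real.log ‖circleMap 0 1 θ - circleMap 0 1 a‖ = 0 := by
  constructor
  · exact circleIntegrable_log_norm_sub_const (a := circleMap 0 1 a) (c := 0) 1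
  · have h := circleAverage_log_norm_sub_const₁ (a := circleMap 0 1 a) (by simp)
    rw [Real.circleAverage] at h
    simpa [Real.pi_ne_zero] using h

lemma aux_prod (a θ : ℝ) : ‖circleMap 0 1 θ - circleMap 0 1 a‖ * ‖circleMap 0 1 θ - circleMap 0 1 (-a)‖
    = 2 * |Real.cos θ - Real.cos a| := by
  rw [← norm_mul]
  have : (circleMap 0 1 θ - circleMap 0 1 a) * (circleMap 0 1 θ - circleMap 0 1 (-a)) =
      circleMap 0 1 θ * ((2 * (Real.cos θ - Real.cos a) : ℝ) : ℂ) := by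
    have h1 := Complex.sin_sq_add_cos_sq (θ:ℂ)
    have h2 := Complex.sin_sq_add_cos_sq (a:ℂ)
    simp only [circleMap, Complex.exp_mul_I, Complex.ofReal_neg, Complex.cos_neg, Complex.sin_neg]
    push_cast
    linear_combination (norm := (ring_nf; simp only [Complex.I_sq]; ring)) h2 - h1
  rw [this, norm_mul, Complex.norm_real, Real.norm_eq_abs, abs_mul]
  simp

lemma aux_symm (a θ : ℝ) : ‖circleMap 0 1 (2*π-θ) - circleMap 0 1 a‖ = ‖circleMap 0 1 θ - circleMap 0 1 (-a)‖ := by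
  rw [← Complex.norm_conj]
  congr 1
  have h := periodic_circleMap 0 1 (-θ)
  rw [show 2*π-θ = -θ + 2*π by ring, h]
  simp [circleMap, ← Complex.exp_conj]

lemma aux_half (a : ℝ) :
    ∫ θ in (0:ℝ)..π, (Real.log ‖circleMap 0 1 θ - circleMap 0 1 a‖
      + Real.log ‖circleMap 0 1 θ - circleMap 0 1 (-a)‖) = 0 := by
  obtain ⟨i1, e1⟩ := aux_zero a
  obtain ⟨i2, e2⟩ := aux_zero (-a)
  have j1 : ∀ f : ℝ → ℝ, IntervalIntegrable f MeasureTheory.volume 0 (2*π) → IntervalIntegrable f MeasureTheory.volume 0 π ∧ IntervalIntegrable f MeasureTheory.volume π (2*π) := by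
    intro f hf
    have := Real.pi_pos
    constructor
    · exact hf.mono_set (by rw [Set.uIcc_of_le (by linarith), Set.uIcc_of_le (by linarith)]; exact Set.Icc_subset_Icc le_rfl (by linarith))
    · exact hf.mono_set (by rw [Set.uIcc_of_le (by linarith), Set.uIcc_of_le (by linarith)]; exact Set.Icc_subset_Icc (by linarith) le_rfl)
  rw [integral_add (j1 _ i1).1 (j1 _ i2).1]
  rw [← integral_add_adjacent_intervals (j1 _ i1).1 (j1 _ i1).2] at e1
  have h := integral_comp_sub_left (a := 0) (b := π) (fun θ => Real.log ‖circleMap 0 1 θ - circleMap 0 1 a‖) (2*π)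
  simp only [aux_symm] at h
  rw [show 2*π-π = π by ring, sub_zero] at h
  rw [h, e1]

lemma aux_cos (a : ℝ) (ha : a ∈ Set.Icc 0 π) :
    ∫ θ in Set.Ioo (0:ℝ) π, Real.log |Real.cos θ - Real.cos a| = -π * Real.log 2 := by
  have h := aux_half a
  obtain ⟨i1, -⟩ := aux_zero a
  rw [integral_of_le Real.pi_pos.le, MeasureTheory.integral_Ioc_eq_integral_Ioo] at h
  have : ∫ θ in Set.Ioo (0:ℝ) π, Real.log |Real.cos θ - Real.cos a| =
     ∫ θ in Set.Ioo (0:ℝ) π, ((Real.log ‖circleMap 0 1 θ - circleMap 0 1 a‖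
      + Real.log ‖circleMap 0 1 θ - circleMap 0 1 (-a)‖) - Real.log 2) := by
    apply MeasureTheory.integral_congr_ae
    filter_upwards [MeasureTheory.ae_restrict_mem measurableSet_Ioo,
      MeasureTheory.Measure.ae_ne (MeasureTheory.volume.restrict (Set.Ioo 0 π)) a] with θ hθ hne
    have hc : Real.cos θ - Real.cos a ≠ 0 := fun h0 =>
      hne (Real.injOn_cos ⟨hθ.1.le, hθ.2.le⟩ ha (sub_eq_zero.1 h0))
    have hp := aux_prod a θ
    have hp0 : ‖circleMap 0 1 θ - circleMap 0 1 a‖ * ‖circleMap 0 1 θ - circleMap 0 1 (-a)‖ ≠ 0 := by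
      rw [hp]; simpa using hc
    rw [← Real.log_mul (left_ne_zero_of_mul hp0) (right_ne_zero_of_mul hp0), hp,
      Real.log_mul two_ne_zero (by simpa using hc)]
    ring
  rw [this, MeasureTheory.integral_sub, h]
  · simp [Real.pi_pos.le]
  · have k : ∀ b, MeasureTheory.IntegrableOn (fun θ : ℝ => Real.log ‖circleMap 0 1 θ - circleMap 0 1 b‖) (Set.Ioo 0 π) := by
      intro b
      have := (aux_zero b).1.1
      exact this.mono_set fun x hx => ⟨hx.1, by have := hx.2; have := Real.pi_pos; linarith⟩
    exact (k a).add (k (-a))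
  · exact MeasureTheory.integrable_const _

theorem integral_log_abs_arcsine_kernel (t : ℝ) (ht : t ∈ Set.Ioo (0 : ℝ) 2) :
    ∫ s in (0 : ℝ)..2, Real.log |t - s| / Real.sqrt (2 * s - s ^ 2) =
      -Real.pi * Real.log 2 := by
  have hc : Real.cos (Real.arccos (1 - t)) = 1 - t :=
    Real.cos_arccos (by linarith [ht.2]) (by linarith [ht.1])
  rw [← aux_cos (Real.arccos (1 - t)) ⟨Real.arccos_nonneg _, Real.arccos_le_pi _⟩,
    integral_of_le zero_le_two, MeasureTheory.integral_Ioc_eq_integral_Ioo]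
  have him : (fun θ => 1 - Real.cos θ) '' Set.Ioo 0 π = Set.Ioo 0 2 := by
    ext s
    constructor
    · rintro ⟨θ, hθ, rfl⟩
      have h1 := Real.cos_lt_cos_of_nonneg_of_le_pi le_rfl hθ.2.le hθ.1
      have h2 := Real.cos_lt_cos_of_nonneg_of_le_pi hθ.1.le le_rfl hθ.2
      rw [Real.cos_zero] at h1
      rw [Real.cos_pi] at h2
      constructor <;> dsimp only <;> linarith
    · rintro ⟨h0, h2⟩
      refine ⟨Real.arccos (1 - s), ⟨Real.arccos_pos.2 (by linarith), ?_⟩, ?_⟩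
      · refine lt_of_le_of_ne (Real.arccos_le_pi _) fun h => ?_
        rw [Real.arccos_eq_pi] at h
        linarith
      · dsimp only
        rw [Real.cos_arccos (by linarith) (by linarith)]; ring
  rw [← him, MeasureTheory.integral_image_eq_integral_abs_deriv_smul measurableSet_Ioo
    (f' := Real.sin)]
  · apply MeasureTheory.setIntegral_congr_fun measurableSet_Ioo
    intro θ hθ
    have hs := Real.sin_pos_of_mem_Ioo hθ
    have e : 2 * (1 - Real.cos θ) - (1 - Real.cos θ) ^ 2 = Real.sin θ ^ 2 := by
      linear_combination -Real.sin_sq_add_cos_sq θ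
    simp only [smul_eq_mul]
    rw [e, Real.sqrt_sq hs.le, abs_of_pos hs, hc, mul_div_cancel₀ _ hs.ne']
    congr 2
    ring
  · intro θ _
    simpa using ((Real.hasDerivAt_cos θ).const_sub 1).hasDerivWithinAt
  · intro x hx y hy h
    exact Real.injOn_cos ⟨hx.1.le, hx.2.le⟩ ⟨hy.1.le, hy.2.le⟩ (by simpa using h)
end

section
/- For test functions φ ∈ S(ℝ) (Schwartz functions), the quadratic form ∬_{ℝ²} φ(t)φ(s) max(log(T/|t-s|),0) ds dt equals (1/π) ∫_ℝ (Si(2π|ξ|T)/|ξ|) |φ̂(ξ)|² dξ, where Si(x) = ∫_0^x sin(t)/t dt and φ̂ is the Fourier transform of φ. -/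
open MeasureTheory Real intervalIntegral

/-- Fourier transform with convention `f̂(ξ) = ∫ e^{-2πiξx} f(x) dx`. -/
noncomputable def fourierHat (f : ℝ → ℝ) (ξ : ℝ) : ℂ :=
  ∫ x : ℝ, Complex.exp (-2 * Real.pi * Complex.I * ξ * x) * (f x : ℂ)

/-- The sine integral `Si(x) = ∫_0^x sin t / t dt`. -/
noncomputable def Si (x : ℝ) : ℝ := ∫ t in (0 : ℝ)..x, Real.sin t / t

/-- The truncated logarithmic kernel. -/
noncomputable def logK (T x : ℝ) : ℝ := max (Real.log (T / |x|)) 0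

lemma Si_eq (x : ℝ) : Si x = ∫ t in (0 : ℝ)..x, Real.sinc t := by
  unfold Si
  apply intervalIntegral.integral_congr_ae
  have : ∀ᵐ t : ℝ, t ≠ 0 := by simp [ae_iff]
  filter_upwards [this] with t ht _
  rw [Real.sinc_of_ne_zero ht]

lemma Si_hasDerivAt (x : ℝ) : HasDerivAt Si (Real.sinc x) x := by
  have h : Si = fun x => ∫ t in (0 : ℝ)..x, Real.sinc t := funext Si_eq
  rw [h]
  exact Real.continuous_sinc.integral_hasStrictDerivAt 0 x |>.hasDerivAt

lemma logK_of_mem {T x : ℝ} (hT : 0 < T) (hx : x ≠ 0) (h : |x| ≤ T) :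
    logK T x = Real.log T - Real.log x := by
  have hx' : 0 < |x| := abs_pos.mpr hx
  unfold logK
  rw [max_eq_left, Real.log_div hT.ne' hx'.ne', Real.log_abs]
  exact Real.log_nonneg ((one_le_div hx').mpr h)

lemma logK_of_gt {T x : ℝ} (hT : 0 < T) (h : T < |x|) : logK T x = 0 := by
  unfold logK
  apply max_eq_right
  exact Real.log_nonpos (by positivity) ((div_le_one (hT.trans h)).mpr h.le)

lemma logK_integrable {T : ℝ} (hT : 0 < T) : Integrable (logK T) := by
  have h1 : IntervalIntegrable (fun x => Real.log T - Real.log x) volume (-T) T :=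
    intervalIntegrable_const.sub intervalIntegral.intervalIntegrable_log'
  rw [intervalIntegrable_iff, Set.uIoc_of_le (by linarith)] at h1
  rw [← integrable_indicator_iff measurableSet_Ioc] at h1
  refine h1.congr ?_
  have : ∀ᵐ t : ℝ, t ≠ 0 := by simp [ae_iff]
  have h2 : ∀ᵐ t : ℝ, t ≠ -T := by simp [ae_iff]
  filter_upwards [this, h2] with x hx hx2
  by_cases h : x ∈ Set.Ioc (-T) T
  · rw [Set.indicator_of_mem h, logK_of_mem hT hx (abs_le.mpr ⟨h.1.le, h.2⟩)]
  · rw [Set.indicator_of_notMem h, logK_of_gt hT]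
    by_contra! h3
    have := abs_le.mp h3
    exact h ⟨lt_of_le_of_ne this.1 (Ne.symm hx2), this.2⟩

lemma cos_integral {T a : ℝ} (hT : 0 < T) (ha : 0 < a) :
    ∫ x in (0:ℝ)..T, (Real.log T - Real.log x) * Real.cos (a * x) = Si (a * T) / a := by
  have key := integral_eq_sub_of_hasDerivAt_of_le (a := 0) (b := T)
    (f := fun x => Real.sinc (a * x) * (x * Real.log T - x * Real.log x) + Si (a * x) / a)
    (f' := fun x => (Real.log T - Real.log x) * Real.cos (a * x)) hT.le ?_ ?_ ?_
  · rw [key]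
    simp [Si]
  · apply Continuous.continuousOn
    have h1 := Real.continuous_sinc
    have h2 := Real.continuous_mul_log
    have h3 : Continuous Si := continuous_iff_continuousAt.mpr
      fun x => (Si_hasDerivAt x).continuousAt
    fun_prop
  · intro x hx
    have hx0 : x ≠ 0 := hx.1.ne'
    have h1 : HasDerivAt (fun x => Real.sin (a * x) / a * (Real.log T - Real.log x)
        + Si (a * x) / a)
        ((Real.cos (a * x) * (a * 1)) / a * (Real.log T - Real.log x)
          + Real.sin (a * x) / a * (0 - x⁻¹) + (Real.sinc (a * x) * (a * 1)) / a) x := by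
      have hl : HasDerivAt (fun x : ℝ => a * x) (a * 1) x := (hasDerivAt_id x).const_mul a
      have hs := (hl.sin.div_const a).mul
        ((hasDerivAt_const x (Real.log T)).sub (Real.hasDerivAt_log hx0))
      have hsi : HasDerivAt (fun x => Si (a * x)) (Real.sinc (a * x) * (a * 1)) x :=
        HasDerivAt.comp x (Si_hasDerivAt (a * x)) hl
      exact hs.add (hsi.div_const a)
    have h2 : HasDerivAt (fun x => Real.sin (a * x) / a * (Real.log T - Real.log x)
        + Si (a * x) / a) ((Real.log T - Real.log x) * Real.cos (a * x)) x := by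
      convert h1 using 1
      rw [Real.sinc_of_ne_zero (by positivity)]
      field_simp
      ring
    refine h2.congr_of_eventuallyEq ?_
    filter_upwards [eventually_ne_nhds hx0] with y hy
    rw [Real.sinc_of_ne_zero (by positivity)]
    field_simp
  · exact (intervalIntegrable_const.sub intervalIntegral.intervalIntegrable_log').mul_continuousOn
      (by fun_prop)

lemma logK_cos {T ξ : ℝ} (hT : 0 < T) (hξ : ξ ≠ 0) :
    ∫ x, logK T x * Real.cos (2 * Real.pi * ξ * x) =
      (1 / Real.pi) * (Si (2 * Real.pi * |ξ| * T) / |ξ|) := by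
  have hξ' : 0 < |ξ| := abs_pos.mpr hξ
  have hpi := Real.pi_pos
  have h1 : ∀ x : ℝ, logK T x * Real.cos (2 * Real.pi * ξ * x) =
      (fun y => logK T y * Real.cos (2 * Real.pi * |ξ| * y)) |x| := by
    intro x
    have : Real.cos (2 * Real.pi * |ξ| * |x|) = Real.cos (2 * Real.pi * ξ * x) := by
      rw [← Real.cos_abs (2 * Real.pi * ξ * x)]
      congr 1
      simp [abs_mul, abs_of_pos hpi]
    simp only [this]
    simp [logK]
  simp_rw [h1]
  rw [integral_comp_abs (f := fun y => logK T y * Real.cos (2 * Real.pi * |ξ| * y))]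
  have h2 : ∫ x in Set.Ioi (0:ℝ), logK T x * Real.cos (2 * Real.pi * |ξ| * x) =
      ∫ x in (0:ℝ)..T, (Real.log T - Real.log x) * Real.cos (2 * Real.pi * |ξ| * x) := by
    rw [intervalIntegral.integral_of_le hT.le]
    rw [setIntegral_eq_of_subset_of_forall_sdiff_eq_zero measurableSet_Ioi
      (Set.Ioc_subset_Ioi_self : Set.Ioc 0 T ⊆ Set.Ioi 0)]
    · apply setIntegral_congr_fun measurableSet_Ioc
      intro x hx
      simp only
      rw [logK_of_mem hT hx.1.ne' (by rw [abs_of_pos hx.1]; exact hx.2)]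
    · intro x hx
      have hx0 : 0 < x := hx.1
      have : T < x := by
        by_contra! h
        exact hx.2 ⟨hx0, h⟩
      rw [logK_of_gt hT (by rwa [abs_of_pos hx0]), zero_mul]
  rw [h2, cos_integral hT (by positivity)]
  field_simp

lemma logK_sin (T ξ : ℝ) :
    ∫ x, logK T x * Real.sin (2 * Real.pi * ξ * x) = 0 := by
  have h := integral_neg_eq_self (fun x => logK T x * Real.sin (2 * Real.pi * ξ * x)) volume
  have h2 : (fun x => logK T (-x) * Real.sin (2 * Real.pi * ξ * (-x))) =
      fun x => -(logK T x * Real.sin (2 * Real.pi * ξ * x)) := by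
    funext x
    simp [logK]
  rw [h2, MeasureTheory.integral_neg] at h
  linarith

open FourierTransform Convolution

lemma fourier_logK {T ξ : ℝ} (hT : 0 < T) (hξ : ξ ≠ 0) :
    𝓕 (fun x => (logK T x : ℂ)) ξ =
      (((1 / Real.pi) * (Si (2 * Real.pi * |ξ| * T) / |ξ|) : ℝ) : ℂ) := by
  rw [Real.fourier_real_eq_integral_exp_smul]
  have hc : Integrable (fun x => logK T x * Real.cos (2 * Real.pi * ξ * x)) :=
    (logK_integrable hT).mul_bdd (c := 1) (by fun_prop)
      (Filter.Eventually.of_forall fun x => by simpa using Real.abs_cos_le_one _)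
  have hs : Integrable (fun x => logK T x * Real.sin (2 * Real.pi * ξ * x)) :=
    (logK_integrable hT).mul_bdd (c := 1) (by fun_prop)
      (Filter.Eventually.of_forall fun x => by simpa using Real.abs_sin_le_one _)
  have h : ∀ x : ℝ, Complex.exp (((-2 * Real.pi * x * ξ : ℝ) : ℂ) * Complex.I) • (logK T x : ℂ) =
      ((logK T x * Real.cos (2 * Real.pi * ξ * x) : ℝ) : ℂ) -
      ((logK T x * Real.sin (2 * Real.pi * ξ * x) : ℝ) : ℂ) * Complex.I := by
    intro x
    rw [Complex.exp_mul_I, ← Complex.ofReal_cos, ← Complex.ofReal_sin,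
      show -2 * Real.pi * x * ξ = -(2 * Real.pi * ξ * x) by ring, Real.cos_neg, Real.sin_neg,
      smul_eq_mul]
    push_cast
    ring
  simp_rw [h]
  rw [integral_sub hc.ofReal (hs.ofReal.mul_const _), MeasureTheory.integral_mul_const]
  rw [integral_complex_ofReal, integral_complex_ofReal, logK_sin, logK_cos hT hξ]
  simp

theorem parseval_logplus_kernel (T : ℝ) (hT : 0 < T) (φ : SchwartzMap ℝ ℝ) :
    ∫ t : ℝ, ∫ s : ℝ, φ t * φ s * max (Real.log (T / |t - s|)) 0 =
      (1 / Real.pi) *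
        ∫ ξ : ℝ, (Si (2 * Real.pi * |ξ| * T) / |ξ|) * ‖fourierHat (fun x => φ x) ξ‖ ^ 2 := by
  let ψ : SchwartzMap ℝ ℂ := SchwartzMap.postcompCLM Complex.ofRealCLM φ
  have hψ : ∀ x, ψ x = (φ x : ℂ) := fun x => rfl
  let K : ℝ → ℂ := fun x => (logK T x : ℂ)
  have hK : Integrable K := (logK_integrable hT).ofReal
  let G : ℝ → ℂ := (ψ : ℝ → ℂ) ⋆[ContinuousLinearMap.mul ℂ ℂ] K
  have hG : Integrable G := ψ.integrable.integrable_convolution _ hK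
  have hGF : ∀ ξ, 𝓕 G ξ = 𝓕 (ψ : ℝ → ℂ) ξ * 𝓕 K ξ :=
    Real.fourier_mul_convolution_eq ψ.integrable hK
  have hF : ∀ ξ, 𝓕 (ψ : ℝ → ℂ) ξ = fourierHat (fun x => φ x) ξ := by
    intro ξ
    rw [Real.fourier_real_eq_integral_exp_smul]
    unfold fourierHat
    congr 1
    funext x
    rw [hψ, smul_eq_mul]
    push_cast
    ring_nf
  let h : SchwartzMap ℝ ℂ := 𝓕⁻ ψ
  have hh : ∀ ξ, h ξ = (starRingEnd ℂ) (fourierHat (fun x => φ x) ξ) := by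
    intro ξ
    have : h ξ = 𝓕⁻ (ψ : ℝ → ℂ) ξ := by
      simp only [h, SchwartzMap.fourierInv_coe]
    rw [this, Real.fourierInv_eq']
    unfold fourierHat
    rw [← integral_conj]
    congr 1
    funext x
    rw [hψ, smul_eq_mul, map_mul, ← Complex.exp_conj]
    have h2 : (starRingEnd ℂ) (2 : ℂ) = 2 := Complex.conj_ofNat 2
    simp [h2]
    left
    ring_nf
  have hFh : 𝓕 (h : ℝ → ℂ) = ψ := by
    rw [← SchwartzMap.fourier_coe]
    simp [h]
  have key : ∫ t, 𝓕 (h : ℝ → ℂ) t * G t = ∫ ξ, h ξ * 𝓕 G ξ := by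
    simpa using! VectorFourier.integral_bilin_fourierIntegral_eq_flip
      (ContinuousLinearMap.mul ℂ ℂ) (L := innerₗ ℝ)
      Real.continuous_fourierChar continuous_inner h.integrable hG
  apply Complex.ofReal_injective
  calc _ = ∫ t, 𝓕 (h : ℝ → ℂ) t * G t := by
        rw [hFh, ← integral_complex_ofReal]
        congr 1
        funext t
        simp only [G, convolution_def, ContinuousLinearMap.mul_apply', K]
        rw [← MeasureTheory.integral_const_mul, ← integral_complex_ofReal]
        congr 1
        funext s
        simp only [hψ, logK]
        push_cast
        ring
    _ = ∫ ξ, h ξ * 𝓕 G ξ := key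
    _ = ∫ ξ, (((1 / Real.pi) * ((Si (2 * Real.pi * |ξ| * T) / |ξ|) *
          ‖fourierHat (fun x => φ x) ξ‖ ^ 2) : ℝ) : ℂ) := by
        apply MeasureTheory.integral_congr_ae
        have : ∀ᵐ t : ℝ, t ≠ 0 := by simp [ae_iff]
        filter_upwards [this] with ξ hξ
        rw [hGF, hF, hh, fourier_logK hT hξ, ← mul_assoc, Complex.conj_mul']
        push_cast
        ring
    _ = _ := by
        rw [integral_complex_ofReal, MeasureTheory.integral_const_mul]
end

section
/- For Schwartz functions φ with ∫_ℝ φ = 0, the quadratic form ∬_{ℝ²} φ(t)φ(s) log(1/|t-s|) ds dt equals (1/2) ∫_ℝ |φ̂(ξ)|²/|ξ| dξ. In particular this quadratic form is nonnegative on mean-zero Schwartz functions. -/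
open MeasureTheory Real

open Set Filter Topology

theorem frul_integrable {a : ℝ} (ha : 0 < a) :
    IntegrableOn (fun u : ℝ => (exp (-(a * u)) - exp (-u)) / u) (Ioi 0) := by
  have hm : 0 < min a 1 := lt_min ha one_pos
  refine Integrable.mono' ((exp_neg_integrableOn_Ioi 0 hm).const_mul |a - 1|) ?_ ?_
  · exact (by fun_prop : Measurable (fun u : ℝ => (exp (-(a * u)) - exp (-u)) / u)).aestronglyMeasurable
  · refine (ae_restrict_iff' measurableSet_Ioi).2 (Eventually.of_forall fun u hu => ?_)
    have hu : 0 < u := hu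
    rw [Real.norm_eq_abs, abs_div, abs_of_pos hu, div_le_iff₀ hu]
    have key : ∀ p q : ℝ, p ≤ q → |exp (-p) - exp (-q)| ≤ (q - p) * exp (-p) := by
      intro p q h
      rw [abs_of_nonneg (by simpa using h)]
      have h1 : exp (-q) = exp (-p) * exp (p - q) := by rw [← exp_add]; ring_nf
      have h2 := add_one_le_exp (p - q)
      have h3 := exp_pos (-p)
      rw [h1]; nlinarith
    rcases le_total a 1 with h | h
    · have := key (a * u) u (by nlinarith)
      rw [min_eq_left h, abs_of_nonpos (by linarith : a - 1 ≤ 0)]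
      rw [neg_mul a]
      linarith
    · have := key u (a * u) (by nlinarith)
      rw [min_eq_right h, abs_of_nonneg (by linarith : 0 ≤ a - 1), abs_sub_comm]
      rw [neg_mul, one_mul]
      linarith

theorem frul_integral {a : ℝ} (ha : 0 < a) :
    ∫ u in Ioi (0:ℝ), (exp (-(a * u)) - exp (-u)) / u = - log a := by
  have h := Frullani.integral_Ioi_eq (f := fun x : ℝ => exp (-x)) (a := a) (b := 1) (L := 1) (R := 0)
    ((by fun_prop : Continuous fun x : ℝ => exp (-x)).locallyIntegrable.locallyIntegrableOn _) ha one_pos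
    (by
      have : Tendsto (fun x : ℝ => exp (-x)) (𝓝 0) (𝓝 (exp (-0))) := 
        (by fun_prop : Continuous fun x : ℝ => exp (-x)).tendsto 0
      simp only [neg_zero, exp_zero] at this
      exact this.mono_left nhdsWithin_le_nhds)
    (tendsto_exp_neg_atTop_nhds_zero)
    (by
      refine (frul_integrable ha).congr_fun (fun u hu => ?_) measurableSet_Ioi
      simp [div_eq_inv_mul])
  simp only [one_mul, smul_eq_mul, sub_zero, mul_one, one_div, log_inv] at h
  rw [← h]
  simp [div_eq_inv_mul]

theorem frul_abs {a : ℝ} (ha : 0 < a) :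
    ∫ u in Ioi (0:ℝ), |(exp (-(a * u)) - exp (-u)) / u| = |log a| := by
  rcases le_total a 1 with h | h
  · rw [abs_of_nonpos (log_nonpos ha.le h), ← frul_integral ha]
    refine setIntegral_congr_fun measurableSet_Ioi (fun u hu => ?_)
    have hu : 0 < u := hu
    refine abs_of_nonneg (div_nonneg (sub_nonneg.2 (exp_le_exp.2 ?_)) hu.le)
    nlinarith
  · rw [abs_of_nonneg (log_nonneg h), ← neg_neg (log a), ← frul_integral ha, ← integral_neg]
    refine setIntegral_congr_fun measurableSet_Ioi (fun u hu => ?_)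
    have hu : 0 < u := hu
    refine abs_of_nonpos (div_nonpos_of_nonpos_of_nonneg (sub_nonpos.2 (exp_le_exp.2 ?_)) hu.le)
    nlinarith

theorem scale_integral {ξ : ℝ} (hξ : ξ ≠ 0) :
    ∫ u in Ioi (0:ℝ), √(π / u) * exp (-(π ^ 2 / u) * ξ ^ 2) / u = 1 / |ξ| := by
  rw [← integral_comp_rpow_Ioi _ (show (-2 : ℝ) ≠ 0 by norm_num)]
  have h := integral_gaussian_Ioi (π ^ 2 * ξ ^ 2)
  have : √(π / (π ^ 2 * ξ ^ 2)) = √π / (π * |ξ|) := by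
    rw [sqrt_div pi_pos.le, ← mul_pow, sqrt_sq_eq_abs, abs_mul, abs_of_pos pi_pos]
  rw [this] at h
  have hs := sq_sqrt pi_pos.le
  have : 1 / |ξ| = 2 * √π * (√π / (π * |ξ|) / 2) := by
    have : |ξ| ≠ 0 := abs_ne_zero.2 hξ
    have := pi_pos.ne'
    field_simp
    linarith
  rw [this, ← h, ← integral_const_mul]
  refine setIntegral_congr_fun measurableSet_Ioi (fun w hw => ?_)
  have hw : 0 < w := hw
  have h2 : w ^ (-2 : ℝ) = (w ^ 2)⁻¹ := by
    rw [rpow_neg hw.le]; norm_cast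
  have h3 : w ^ (-2 - 1 : ℝ) = (w ^ 3)⁻¹ := by
    rw [show (-2 - 1 : ℝ) = -(3:ℕ) by norm_num, rpow_neg hw.le, rpow_natCast]
  simp only [smul_eq_mul]
  rw [h2, h3, div_inv_eq_mul, div_inv_eq_mul, div_inv_eq_mul, sqrt_mul pi_pos.le, sqrt_sq hw.le]
  rw [show |(-2:ℝ)| = 2 by norm_num]
  rw [show -(π ^ 2 * w ^ 2) * ξ ^ 2 = -(π ^ 2 * ξ ^ 2) * w ^ 2 by ring]
  field_simp

theorem gauss_ft {u : ℝ} (hu : 0 < u) (x : ℝ) :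
    ∫ ξ : ℝ, Complex.exp (-2 * π * Complex.I * ξ * x) *
      ((√(π / u) * exp (-(π ^ 2 / u) * ξ ^ 2) : ℝ) : ℂ) = (exp (-(x ^ 2 * u)) : ℝ) := by
  have hb : 0 < ((π ^ 2 / u : ℝ) : ℂ).re := by
    rw [Complex.ofReal_re]; positivity
  have h := fourierIntegral_gaussian hb ((-2 * π * x : ℝ) : ℂ)
  have e1 : ((π : ℂ) / ((π ^ 2 / u : ℝ) : ℂ)) ^ (1 / 2 : ℂ) = ((√(u / π) : ℝ) : ℂ) := by
    rw [sqrt_eq_rpow, Complex.ofReal_cpow (by positivity)]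
    congr 1
    · push_cast
      have := Complex.ofReal_ne_zero.2 pi_pos.ne'
      have := Complex.ofReal_ne_zero.2 hu.ne'
      field_simp
    · push_cast; rfl
  have e2 : -(((-2 * π * x : ℝ) : ℂ)) ^ 2 / (4 * ((π ^ 2 / u : ℝ) : ℂ)) = ((-(x ^ 2 * u) : ℝ) : ℂ) := by
    push_cast
    have := Complex.ofReal_ne_zero.2 pi_pos.ne'
    have := Complex.ofReal_ne_zero.2 hu.ne'
    field_simp
    ring
  rw [e1, e2] at h
  have e3 : √(π / u) * √(u / π) = 1 := by
    rw [← sqrt_mul (by positivity), div_mul_div_cancel₀ hu.ne', div_self pi_pos.ne', sqrt_one]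
  have : ((exp (-(x ^ 2 * u)) : ℝ) : ℂ) = ((√(π / u) : ℝ) : ℂ) *
      (((√(u / π) : ℝ) : ℂ) * Complex.exp ((-(x ^ 2 * u) : ℝ) : ℂ)) := by
    rw [← mul_assoc, ← Complex.ofReal_mul, e3]; simp
  rw [this, ← h, ← integral_const_mul]
  congr 1
  ext ξ
  push_cast
  rw [show -2 * (π:ℂ) * Complex.I * ξ * x = Complex.I * (-2 * π * x) * ξ by ring]
  ring

theorem ae_ne_diag : ∀ᵐ p : ℝ × ℝ ∂((volume : Measure ℝ).prod (volume : Measure ℝ)), p.1 - p.2 ≠ 0 :=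
  (quasiMeasurePreserving_sub_of_right_invariant (volume : Measure ℝ) (volume : Measure ℝ)).ae
    (Measure.ae_ne volume 0)

theorem log_integrable (φ : SchwartzMap ℝ ℝ) :
    Integrable (fun p : ℝ × ℝ => φ p.1 * φ p.2 * log (1 / |p.1 - p.2|))
      ((volume : Measure ℝ).prod (volume : Measure ℝ)) := by
  let g : ℝ → ℝ := (Ioc (-1) 1).indicator (fun x => |log x|)
  have hg : Integrable g := by
    rw [integrable_indicator_iff measurableSet_Ioc]
    have : IntervalIntegrable log volume (-1) 1 := intervalIntegral.intervalIntegrable_log'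
    exact ((intervalIntegrable_iff_integrableOn_Ioc_of_le (by norm_num)).1 this).abs
  have hφ : Integrable (fun x => |φ x|) := (φ.integrable (μ := volume)).abs
  have hφ1 : Integrable (fun x => |x| * |φ x|) := by
    simpa using φ.integrable_pow_mul volume 1
  obtain ⟨C, hC⟩ : ∃ C, ∀ x, |φ x| ≤ C :=
    ⟨_, fun x => by simpa using SchwartzMap.norm_le_seminorm ℝ φ x⟩
  have h1 := (Integrable.convolution_integrand (ContinuousLinearMap.mul ℝ ℝ) hφ hg).const_mul C
  have h2 := hφ1.mul_prod hφ
  have h3 := hφ.mul_prod hφ1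
  refine ((h1.add h2).add h3).mono' ?_ (Eventually.of_forall fun p => ?_)
  · have hc : Measurable φ := φ.continuous.measurable
    exact (by fun_prop : Measurable (fun p : ℝ × ℝ => φ p.1 * φ p.2 * log (1 / |p.1 - p.2|))).aestronglyMeasurable
  · simp only [Pi.add_apply, ContinuousLinearMap.mul_apply']
    have hl : |log (p.1 - p.2)| ≤ g (p.1 - p.2) + |p.1 - p.2| := by
      by_cases h : p.1 - p.2 ∈ Ioc (-1 : ℝ) 1
      · simp only [g, indicator_of_mem h]
        linarith [abs_nonneg (p.1 - p.2)]
      · simp only [g, indicator_of_notMem h]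
        have h1 : 1 ≤ |p.1 - p.2| := by
          by_contra h'
          push Not at h'
          rw [abs_lt] at h'
          exact h ⟨h'.1, h'.2.le⟩
        rw [← log_abs, abs_of_nonneg (log_nonneg h1)]
        linarith [log_le_sub_one_of_pos (by linarith : 0 < |p.1 - p.2|)]
    rw [one_div, log_inv, log_abs, Real.norm_eq_abs, abs_mul, abs_mul, abs_neg]
    have hg0 : 0 ≤ g (p.1 - p.2) := indicator_nonneg (fun _ _ => abs_nonneg _) _
    have a1 := abs_nonneg (φ p.1)
    have a2 := abs_nonneg (φ p.2)
    calc |φ p.1| * |φ p.2| * |log (p.1 - p.2)| 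
        ≤ |φ p.1| * |φ p.2| * (g (p.1 - p.2) + (|p.1| + |p.2|)) := by
          gcongr
          exact hl.trans (by gcongr; exact abs_sub _ _)
      _ = |φ p.1| * (|φ p.2| * g (p.1 - p.2)) + |p.1| * |φ p.1| * |φ p.2| + |φ p.1| * (|p.2| * |φ p.2|) := by ring
      _ ≤ _ := by
          gcongr
          exact hC _

theorem fhat_meas (φ : SchwartzMap ℝ ℝ) : Measurable (fourierHat (fun x => φ x)) := by
  have hc : Continuous φ := φ.continuous
  have : StronglyMeasurable (Function.uncurry fun (ξ x : ℝ) =>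
      Complex.exp (-2 * Real.pi * Complex.I * ξ * x) * (φ x : ℂ)) := by
    apply Continuous.stronglyMeasurable
    unfold Function.uncurry
    fun_prop
  exact (this.integral_prod_right (ν := volume)).measurable

theorem fhat_bound (φ : SchwartzMap ℝ ℝ) : ∃ C, ∀ ξ, ‖fourierHat (fun x => φ x) ξ‖ ≤ C := by
  refine ⟨∫ x, ‖φ x‖, fun ξ => (norm_integral_le_integral_norm _).trans_eq ?_⟩
  congr 1
  ext x
  rw [norm_mul, show -2 * (Real.pi : ℂ) * Complex.I * ξ * x = ((-2 * π * ξ * x : ℝ) : ℂ) * Complex.I by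
    push_cast; ring, Complex.norm_exp_ofReal_mul_I, one_mul, Complex.norm_real]

theorem freq_integrable (φ : SchwartzMap ℝ ℝ) {u : ℝ} (hu : 0 < u) :
    Integrable (fun ξ => ‖fourierHat (fun x => φ x) ξ‖ ^ 2 * (√(π / u) * exp (-(π ^ 2 / u) * ξ ^ 2))) := by
  obtain ⟨C, hC⟩ := fhat_bound φ
  have := fhat_meas φ
  refine Integrable.bdd_mul (c := C ^ 2) ((integrable_exp_neg_mul_sq (by positivity)).const_mul _)
    (by fun_prop) (Eventually.of_forall fun ξ => ?_)
  rw [norm_pow, norm_norm]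
  exact pow_le_pow_left₀ (norm_nonneg _) (hC ξ) 2

theorem pairing (φ : SchwartzMap ℝ ℝ) {u : ℝ} (hu : 0 < u) :
    ∫ p : ℝ × ℝ, φ p.1 * φ p.2 * exp (-((p.1 - p.2) ^ 2 * u)) ∂((volume : Measure ℝ).prod volume) =
      ∫ ξ, ‖fourierHat (fun x => φ x) ξ‖ ^ 2 * (√(π / u) * exp (-(π ^ 2 / u) * ξ ^ 2)) := by
  let G : ℝ → ℝ := fun ξ => √(π / u) * exp (-(π ^ 2 / u) * ξ ^ 2)
  have hG : Integrable G := (integrable_exp_neg_mul_sq (by positivity)).const_mul _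
  have hc : Continuous φ := φ.continuous
  have hφ : Integrable φ := φ.integrable
  let K : ℝ × ℝ → ℝ → ℂ := fun p ξ => ((φ p.1 * φ p.2 : ℝ) : ℂ) *
    (Complex.exp (-2 * π * Complex.I * ξ * ((p.1 - p.2 : ℝ) : ℂ)) * (G ξ : ℂ))
  have hK : Integrable (Function.uncurry K) (((volume : Measure ℝ).prod volume).prod volume) := by
    have h := (hφ.mul_prod hφ).mul_prod hG
    refine h.mono ?_ (Eventually.of_forall fun q => ?_)
    · apply Continuous.aestronglyMeasurable
      simp only [K, G, Function.uncurry_def]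
      fun_prop
    · simp only [K, Function.uncurry_def]
      rw [norm_mul, norm_mul, show -2 * (Real.pi : ℂ) * Complex.I * q.2 * ((q.1.1 - q.1.2 : ℝ) : ℂ) = 
        ((-2 * π * q.2 * (q.1.1 - q.1.2) : ℝ) : ℂ) * Complex.I by
        push_cast; ring, Complex.norm_exp_ofReal_mul_I, one_mul, Complex.norm_real, Complex.norm_real, ← norm_mul]
  apply Complex.ofReal_injective
  rw [← integral_complex_ofReal, ← integral_complex_ofReal]
  calc _ = ∫ p : ℝ × ℝ, (∫ ξ, K p ξ) ∂((volume : Measure ℝ).prod volume) := by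
        congr 1
        ext p
        simp only [K]
        rw [integral_const_mul, gauss_ft hu, Complex.ofReal_mul]
    _ = ∫ ξ, ∫ p : ℝ × ℝ, K p ξ ∂((volume : Measure ℝ).prod volume) := integral_integral_swap hK
    _ = _ := by
        congr 1
        ext ξ
        have : ∀ p : ℝ × ℝ, K p ξ = (Complex.exp (-2 * π * Complex.I * ξ * p.1) * (φ p.1 : ℂ)) *
            (starRingEnd ℂ) (Complex.exp (-2 * π * Complex.I * ξ * p.2) * (φ p.2 : ℂ)) * (G ξ : ℂ) := by
          intro p
          rw [map_mul, ← Complex.exp_conj]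
          simp only [K, map_mul, map_neg, Complex.conj_ofReal, Complex.conj_I, map_ofNat]
          rw [show -2 * (π : ℂ) * Complex.I * ξ * ((p.1 - p.2 : ℝ) : ℂ) = 
            -2 * (π : ℂ) * Complex.I * ξ * p.1 + -2 * (π : ℂ) * -Complex.I * ξ * p.2 by push_cast; ring, Complex.exp_add]
          push_cast
          ring
        simp_rw [this]
        rw [integral_mul_const, integral_prod_mul 
          (fun x : ℝ => Complex.exp (-2 * π * Complex.I * ξ * x) * (φ x : ℂ)) 
          (fun x : ℝ => (starRingEnd ℂ) (Complex.exp (-2 * π * Complex.I * ξ * x) * (φ x : ℂ))),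
          integral_conj]
        rw [Complex.ofReal_mul (_ ^ 2), Complex.ofReal_pow, ← Complex.mul_conj']
        rfl

theorem swap_kernel (φ : SchwartzMap ℝ ℝ) (hφ : ∫ x : ℝ, φ x = 0) :
    ∫ t : ℝ, ∫ s : ℝ, φ t * φ s * Real.log (1 / |t - s|) =
      (1 / 2) * ∫ u in Ioi (0:ℝ), ∫ ξ, ‖fourierHat (fun x => φ x) ξ‖ ^ 2 *
        (√(π / u) * exp (-(π ^ 2 / u) * ξ ^ 2) / u) := by
  have hc : Measurable φ := φ.continuous.measurable
  have hi : Integrable φ := φ.integrable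
  have hlog := log_integrable φ
  let F : ℝ × ℝ → ℝ → ℝ := fun p u => φ p.1 * φ p.2 *
    ((exp (-((p.1 - p.2) ^ 2 * u)) - exp (-u)) / u)
  have hF : Integrable (Function.uncurry F)
      (((volume : Measure ℝ).prod volume).prod (volume.restrict (Ioi 0))) := by
    have hm : Measurable (Function.uncurry F) := by
      simp only [F, Function.uncurry_def]
      fun_prop
    rw [integrable_prod_iff hm.aestronglyMeasurable]
    constructor
    · filter_upwards [ae_ne_diag] with p hp
      exact (frul_integrable (by positivity : 0 < (p.1 - p.2) ^ 2)).const_mul (φ p.1 * φ p.2)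
    · refine (hlog.norm.const_mul 2).congr ?_
      filter_upwards [ae_ne_diag] with p hp
      simp only [Function.uncurry_apply_pair, F, norm_mul, integral_const_mul]
      simp only [Real.norm_eq_abs]
      rw [frul_abs (by positivity : 0 < (p.1 - p.2) ^ 2), log_pow, one_div, log_inv, log_abs, abs_neg,
        abs_mul]
      simp
      ring
  rw [← integral_prod (fun p : ℝ × ℝ => φ p.1 * φ p.2 * Real.log (1 / |p.1 - p.2|)) hlog]
  have e1 : ∫ p : ℝ × ℝ, φ p.1 * φ p.2 * Real.log (1 / |p.1 - p.2|) ∂((volume : Measure ℝ).prod volume)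
      = (1 / 2) * ∫ p : ℝ × ℝ, (∫ u in Ioi (0:ℝ), F p u) ∂((volume : Measure ℝ).prod volume) := by
    rw [← integral_const_mul]
    refine integral_congr_ae ?_
    filter_upwards [ae_ne_diag] with p hp
    simp only [F, integral_const_mul]
    rw [frul_integral (by positivity : 0 < (p.1 - p.2) ^ 2), log_pow, one_div, log_inv, log_abs]
    push_cast
    ring
  rw [e1, integral_integral_swap hF]
  congr 1
  refine setIntegral_congr_fun measurableSet_Ioi (fun u hu => ?_)
  have hu : 0 < u := hu
  have hp : Integrable (fun p : ℝ × ℝ => φ p.1 * φ p.2) ((volume : Measure ℝ).prod volume) := hi.mul_prod hi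
  have hp2 : Integrable (fun p : ℝ × ℝ => φ p.1 * φ p.2 * exp (-((p.1 - p.2) ^ 2 * u)))
      ((volume : Measure ℝ).prod volume) := by
    refine hp.mul_bdd (c := 1) (by fun_prop) (Eventually.of_forall fun p => ?_)
    rw [Real.norm_eq_abs, abs_exp, exp_le_one_iff]
    have := mul_nonneg (sq_nonneg (p.1 - p.2)) hu.le
    linarith
  have e2 : ∀ p : ℝ × ℝ, F p u = (φ p.1 * φ p.2 * exp (-((p.1 - p.2) ^ 2 * u)) - 
      φ p.1 * φ p.2 * exp (-u)) / u := by intro p; simp only [F]; ring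
  simp only [e2]
  rw [integral_div, integral_sub hp2 (hp.mul_const _), integral_mul_const, integral_prod_mul, hφ, pairing φ hu]
  rw [zero_mul, zero_mul, sub_zero, ← integral_div]
  congr 1
  ext ξ
  ring

theorem final_swap (φ : SchwartzMap ℝ ℝ) :
    ∫ u in Ioi (0:ℝ), ∫ ξ, ‖fourierHat (fun x => φ x) ξ‖ ^ 2 *
        (√(π / u) * exp (-(π ^ 2 / u) * ξ ^ 2) / u) = 
    ∫ ξ : ℝ, ‖fourierHat (fun x => φ x) ξ‖ ^ 2 / |ξ| := by
  have hm := fhat_meas φ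
  have hm2 : Measurable (Function.uncurry fun (u ξ : ℝ) => ‖fourierHat (fun x => φ x) ξ‖ ^ 2 *
        (√(π / u) * exp (-(π ^ 2 / u) * ξ ^ 2) / u)) := by
    simp only [Function.uncurry_def]
    fun_prop
  rw [integral_eq_lintegral_of_nonneg_ae, integral_eq_lintegral_of_nonneg_ae]
  · congr 1
    calc _ = ∫⁻ u in Ioi (0:ℝ), ∫⁻ ξ, ENNReal.ofReal (‖fourierHat (fun x => φ x) ξ‖ ^ 2 *
        (√(π / u) * exp (-(π ^ 2 / u) * ξ ^ 2) / u)) := by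
          refine setLIntegral_congr_fun measurableSet_Ioi (fun u hu => ?_)
          have hu : 0 < u := hu
          refine ofReal_integral_eq_lintegral_ofReal ?_ (Eventually.of_forall fun ξ => by positivity)
          refine ((freq_integrable φ hu).div_const u).congr (Eventually.of_forall fun ξ => ?_)
          simp only
          ring
      _ = ∫⁻ ξ, ∫⁻ u in Ioi (0:ℝ), ENNReal.ofReal (‖fourierHat (fun x => φ x) ξ‖ ^ 2 *
        (√(π / u) * exp (-(π ^ 2 / u) * ξ ^ 2) / u)) := 
          lintegral_lintegral_swap hm2.ennreal_ofReal.aemeasurable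
      _ = _ := by
          refine lintegral_congr_ae ?_
          filter_upwards [Measure.ae_ne volume (0:ℝ)] with ξ hξ
          have h := scale_integral hξ
          have hI : IntegrableOn (fun u => √(π / u) * exp (-(π ^ 2 / u) * ξ ^ 2) / u) (Ioi 0) := by
            apply Integrable.of_integral_ne_zero
            rw [h]
            have := abs_pos.2 hξ
            positivity
          rw [← ofReal_integral_eq_lintegral_ofReal (hI.const_mul _), integral_const_mul, h, mul_one_div]
          refine (ae_restrict_iff' measurableSet_Ioi).2 (Eventually.of_forall fun u hu => ?_)
          have hu : 0 < u := hu
          simp only [Pi.zero_apply]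
          positivity
  · exact Eventually.of_forall fun ξ => by simp only [Pi.zero_apply]; positivity
  · exact (by fun_prop : Measurable _).aestronglyMeasurable
  · refine (ae_restrict_iff' measurableSet_Ioi).2 (Eventually.of_forall fun u hu => ?_)
    have hu : 0 < u := hu
    exact integral_nonneg fun ξ => by simp only [Pi.zero_apply]; positivity
  · exact (hm2.stronglyMeasurable.integral_prod_right (ν := volume)).aestronglyMeasurable

theorem parseval_log_kernel_mean_zero (φ : SchwartzMap ℝ ℝ)
    (hφ : ∫ x : ℝ, φ x = 0) :
    (∫ t : ℝ, ∫ s : ℝ, φ t * φ s * Real.log (1 / |t - s|) =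
      (1 / 2) * ∫ ξ : ℝ, ‖fourierHat (fun x => φ x) ξ‖ ^ 2 / |ξ|) ∧
    0 ≤ ∫ t : ℝ, ∫ s : ℝ, φ t * φ s * Real.log (1 / |t - s|) := by
  have h := (swap_kernel φ hφ).trans (congrArg (fun x => (1 / 2 : ℝ) * x) (final_swap φ))
  refine ⟨h, ?_⟩
  rw [h]
  exact mul_nonneg (by norm_num) (integral_nonneg fun ξ => by simp only [Pi.zero_apply]; positivity)
end

section
/- For every t > 0 and every L > 0 with 0 < t, the kernel K_L(t,s) = (1/(πL)) (1−g_L(t)²)/((1−g_L(t))² − 2g_L(t)s/L) · 1/√(1−(1+s/L)²) satisfies ∫_{−2L}^0 K_L(t,s) ds = 1, where g_L(t) = t/L + 1 − √((t/L+1)²−1). -/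
open Real intervalIntegral

/-- The boundary conformal factor `g_L(t) = t/L + 1 - √((t/L+1)² - 1)`. -/
noncomputable def gL (L t : ℝ) : ℝ := t / L + 1 - Real.sqrt ((t / L + 1) ^ 2 - 1)

/-- The finite-window prediction kernel `K_L(t,s)`. -/
noncomputable def KL (L t s : ℝ) : ℝ :=
  (1 / (Real.pi * L)) * ((1 - gL L t ^ 2) / ((1 - gL L t) ^ 2 - 2 * gL L t * s / L)) *
    (1 / Real.sqrt (1 - (1 + s / L) ^ 2))

theorem gL_bounds (L t : ℝ) (hL : 0 < L) (ht : 0 < t) : 0 < gL L t ∧ gL L t < 1 := by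
  unfold gL
  have h : 0 < t / L := div_pos ht hL
  generalize t / L = x at *
  constructor
  · have : Real.sqrt ((x + 1) ^ 2 - 1) < x + 1 := by
      rw [Real.sqrt_lt' (by linarith)]; linarith
    linarith
  · have : x < Real.sqrt ((x + 1) ^ 2 - 1) := by
      apply Real.lt_sqrt_of_sq_lt; nlinarith
    linarith

theorem KL_integrates_to_one (L t : ℝ) (hL : 0 < L) (ht : 0 < t) :
    ∫ s in (-(2 * L))..0, KL L t s = 1 := by
  obtain ⟨hg0, hg1⟩ := gL_bounds L t hL ht
  unfold KL
  generalize gL L t = g at *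
  have hpi := Real.pi_pos
  have hD : ∀ s, s ≤ 0 → 0 < (1 - g) ^ 2 - 2 * g * s / L := by
    intro s hs
    have h1 : 0 < (1 - g) ^ 2 := by nlinarith
    have h2 : 2 * g * s / L ≤ 0 :=
      div_nonpos_of_nonpos_of_nonneg (by nlinarith) hL.le
    linarith
  let v : ℝ → ℝ := fun s =>
    ((1 + g ^ 2) * (1 + s / L) - 2 * g) / ((1 - g) ^ 2 - 2 * g * s / L)
  let F : ℝ → ℝ := fun s => Real.arcsin (v s) / Real.pi
  have hab : -(2 * L) ≤ 0 := by linarith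
  have hcont : ContinuousOn F (Set.Icc (-(2 * L)) 0) := by
    apply ContinuousOn.div_const
    apply Real.continuous_arcsin.comp_continuousOn
    apply ContinuousOn.div (by fun_prop) (by fun_prop)
    intro s hs
    exact (hD s hs.2).ne'
  have hu : ∀ s ∈ Set.Ioo (-(2 * L)) 0, 0 < 1 - (1 + s / L) ^ 2 := by
    intro s hs
    have h1 : s / L < 0 := div_neg_of_neg_of_pos hs.2 hL
    have h2 : -2 < s / L := by rw [lt_div_iff₀ hL]; linarith [hs.1]
    nlinarith
  have hderiv : ∀ s ∈ Set.Ioo (-(2 * L)) 0, HasDerivAt F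
      ((1 / (Real.pi * L)) * ((1 - g ^ 2) / ((1 - g) ^ 2 - 2 * g * s / L)) *
    (1 / Real.sqrt (1 - (1 + s / L) ^ 2))) s := by
    intro s hs
    have hDs := hD s hs.2.le
    have hus := hu s hs
    have hg2 : 0 < 1 - g ^ 2 := by nlinarith
    have hv : 1 - v s ^ 2 = ((1 - g ^ 2) / ((1 - g) ^ 2 - 2 * g * s / L)) ^ 2
        * (1 - (1 + s / L) ^ 2) := by
      simp only [v]
      rw [div_pow, div_pow, div_mul_eq_mul_div, eq_div_iff (by positivity), sub_mul,
        div_mul_cancel₀ _ (by positivity)]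
      ring
    have hvpos : 0 < 1 - v s ^ 2 := by rw [hv]; positivity
    have hsq : Real.sqrt (1 - v s ^ 2) = ((1 - g ^ 2) / ((1 - g) ^ 2 - 2 * g * s / L))
        * Real.sqrt (1 - (1 + s / L) ^ 2) := by
      rw [hv, Real.sqrt_mul (by positivity), Real.sqrt_sq (by positivity)]
    have hn : HasDerivAt (fun s : ℝ => (1 + g ^ 2) * (1 + s / L) - 2 * g)
        ((1 + g ^ 2) * (1 / L)) s :=
      ((((hasDerivAt_id s).div_const L).const_add 1).const_mul _).sub_const _
    have hd : HasDerivAt (fun s : ℝ => (1 - g) ^ 2 - 2 * g * s / L)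
        (-(2 * g * 1 / L)) s :=
      ((((hasDerivAt_id s).const_mul (2 * g)).div_const L).const_sub _)
    have hvd := hn.div hd hDs.ne'
    have hF := ((Real.hasDerivAt_arcsin (x := v s) (by rintro h; rw [h] at hvpos; norm_num at hvpos)
      (by rintro h; rw [h] at hvpos; norm_num at hvpos)).comp s hvd).div_const Real.pi
    refine hF.congr_deriv ?_
    rw [hsq]
    have hs0 := Real.sqrt_pos.2 hus
    have hnum : (1 + g ^ 2) * (1 / L) * ((1 - g) ^ 2 - 2 * g * s / L) -
        ((1 + g ^ 2) * (1 + s / L) - 2 * g) * (-(2 * g * 1 / L)) = (1 - g ^ 2) ^ 2 / L := by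
      field_simp
      ring
    rw [hnum]
    generalize Real.sqrt (1 - (1 + s / L) ^ 2) = r at *
    generalize (1 - g) ^ 2 - 2 * g * s / L = d at *
    field_simp
  have hint := intervalIntegral.integrableOn_deriv_of_nonneg hcont hderiv (by
    intro s hs
    have hDs := hD s hs.2.le
    have hg2 : 0 < 1 - g ^ 2 := by nlinarith
    positivity)
  rw [intervalIntegral.integral_eq_sub_of_hasDerivAt_of_le hab hcont hderiv
    ((intervalIntegrable_iff_integrableOn_Ioc_of_le hab).2 hint)]
  have e0 : v 0 = 1 := by
    have := (hD 0 le_rfl).ne'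
    simp only [v]
    rw [div_eq_one_iff_eq this]; ring
  have e1 : v (-(2 * L)) = -1 := by
    have := (hD (-(2 * L)) hab).ne'
    simp only [v]
    rw [div_eq_iff this]; field_simp; ring
  simp only [F, e0, e1, Real.arcsin_one, Real.arcsin_neg_one]
  field_simp
  norm_num
end
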